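/- Projected entropy is controlled by the spatial Fisher information: there exists a constant C > 0, depending only on d, such that for every smooth h : 𝕋^d × ℝ^d → (0,∞) bounded above and below by positive constants, with bounded gradient and ∫ h dμ = 1, one has ∫_{𝕋^d} Πh log(Πh) dx ≤ C ∫_{𝕋^d × ℝ^d} (|∇_x h|²/h) dμ. -/

import Mathlib

/-! The entropy `ent f = ∫ f log f - (∫ f) log (∫ f)` is convex in `f` by Gibbs' variational
principle, so the entropy of the projection `Πh`, an average over `v` of the functions `h(·, v)`, is
at most the average of their entropies, and `Πh` itself never has to be differentiated.

It remains to bound the entropy of a single function on the unit cube by its Fisher information.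
Subadditivity of the entropy over coordinates reduces this to `[0, 1]`. There `log t ≤ t - 1` gives
`ent f ≤ Var f / ∫ f`; by Popoviciu's inequality `Var f` is at most a quarter of the squared
oscillation of `f`, hence at most `(∫ |f'|)² / 4`, and Cauchy–Schwarz gives
`(∫ |f'|)² ≤ (∫ f) (∫ f'² / f)`. Thus `C = 1 / 4` works in every dimension. -/

open MeasureTheory Real Filter

noncomputable section

/-- The standard Gaussian density `ℳ(v) = (2π)^{-d/2} exp(-|v|²/2)` on `ℝ^d`. -/
def gauss (d : ℕ) (v : Fin d → ℝ) : ℝ :=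
  (2 * Real.pi) ^ (-(d : ℝ) / 2) * Real.exp (-(∑ i, v i ^ 2) / 2)

/-- Fundamental domain `[0,1]^d` of the torus `𝕋^d`; the normalized Lebesgue measure on
the torus is the restriction of Lebesgue measure to this cube. -/
def cube (d : ℕ) : Set (Fin d → ℝ) := Set.Icc 0 1

/-- A function of `(x,v)` represents a function on `𝕋^d × ℝ^d` iff it is `ℤ^d`-periodic in `x`. -/
def IsPeriodic (d : ℕ) (f : (Fin d → ℝ) → (Fin d → ℝ) → ℝ) : Prop :=
  ∀ (x v : Fin d → ℝ) (k : Fin d → ℤ), f (x + fun i => (k i : ℝ)) v = f x v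

/-- The projection `Πf(x) = ∫ f(x,u) ℳ(u) du`. -/
def proj (d : ℕ) (f : (Fin d → ℝ) → (Fin d → ℝ) → ℝ) (x : Fin d → ℝ) : ℝ :=
  ∫ u, f x u * gauss d u

/-- Euclidean dot product on `ℝ^d`. -/
def dotp (d : ℕ) (a b : Fin d → ℝ) : ℝ := ∑ i, a i * b i

/-- Squared Euclidean norm on `ℝ^d`. -/
def nsq (d : ℕ) (a : Fin d → ℝ) : ℝ := ∑ i, a i ^ 2

/-- Gradient in the `x` variable. -/
def gradx (d : ℕ) (f : (Fin d → ℝ) → (Fin d → ℝ) → ℝ) (x v : Fin d → ℝ) : Fin d → ℝ :=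
  fun i => fderiv ℝ (fun y => f y v) x (Pi.single i 1)

/-- Gradient in the `v` variable. -/
def gradv (d : ℕ) (f : (Fin d → ℝ) → (Fin d → ℝ) → ℝ) (x v : Fin d → ℝ) : Fin d → ℝ :=
  fun i => fderiv ℝ (fun w => f x w) v (Pi.single i 1)

/-- Gradient of a function of `x` only. -/
def grad1 (d : ℕ) (g : (Fin d → ℝ) → ℝ) (x : Fin d → ℝ) : Fin d → ℝ :=
  fun i => fderiv ℝ g x (Pi.single i 1)

/-- Laplacian in the `v` variable. -/
def lapv (d : ℕ) (f : (Fin d → ℝ) → (Fin d → ℝ) → ℝ) (x v : Fin d → ℝ) : ℝ :=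
  ∑ i, fderiv ℝ (fun w => gradv d f x w i) v (Pi.single i 1)

/-- Integral against `μ = ℳ(v) dv dx` on `𝕋^d × ℝ^d`. -/
def intMu (d : ℕ) (F : (Fin d → ℝ) → (Fin d → ℝ) → ℝ) : ℝ :=
  ∫ x in cube d, ∫ v, F x v * gauss d v

/-- `I^X(h) = ∫ |∇_x h|²/h dμ`. -/
def IX (d : ℕ) (h : (Fin d → ℝ) → (Fin d → ℝ) → ℝ) : ℝ :=
  intMu d fun x v => nsq d (gradx d h x v) / h x v

/-- `I^V(h) = ∫ |∇_v h|²/h dμ`. -/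
def IV (d : ℕ) (h : (Fin d → ℝ) → (Fin d → ℝ) → ℝ) : ℝ :=
  intMu d fun x v => nsq d (gradv d h x v) / h x v

/-- `I^M(h) = ∫ (∇_x h · ∇_v h)/h dμ`. -/
def IM (d : ℕ) (h : (Fin d → ℝ) → (Fin d → ℝ) → ℝ) : ℝ :=
  intMu d fun x v => dotp d (gradx d h x v) (gradv d h x v) / h x v

/-- The full Fisher information `I(h) = ∫ |∇_{x,v} h|²/h dμ`. -/
def Ifull (d : ℕ) (h : (Fin d → ℝ) → (Fin d → ℝ) → ℝ) : ℝ :=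
  intMu d fun x v => (nsq d (gradx d h x v) + nsq d (gradv d h x v)) / h x v

/-- `I^{ΠX}(h) = ∫_{𝕋^d} |∇_x Πh|²/Πh dx`. -/
def IPiX (d : ℕ) (h : (Fin d → ℝ) → (Fin d → ℝ) → ℝ) : ℝ :=
  ∫ x in cube d, nsq d (grad1 d (proj d h) x) / proj d h x

/-- `I^{ΠX/X}(h) = ∫ (|∇_x(Πh/h)|²/(Πh/h)) h dμ`. -/
def IPiXX (d : ℕ) (h : (Fin d → ℝ) → (Fin d → ℝ) → ℝ) : ℝ :=
  intMu d fun x v =>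
    nsq d (gradx d (fun y w => proj d h y / h y w) x v) / (proj d h x / h x v) * h x v

/-- `I^{ΠV/V}(h) = ∫ (|∇_v h|²/h)(Πh/h) dμ`. -/
def IPiVV (d : ℕ) (h : (Fin d → ℝ) → (Fin d → ℝ) → ℝ) : ℝ :=
  intMu d fun x v => nsq d (gradv d h x v) / h x v * (proj d h x / h x v)

/-- The relative entropy `H(h) = ∫ h log h dμ`. -/
def Hent (d : ℕ) (h : (Fin d → ℝ) → (Fin d → ℝ) → ℝ) : ℝ :=
  intMu d fun x v => h x v * Real.log (h x v)

/-- The projected entropy `H_Π(h) = ∫_{𝕋^d} Πh log Πh dx`. -/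
def HPi (d : ℕ) (h : (Fin d → ℝ) → (Fin d → ℝ) → ℝ) : ℝ :=
  ∫ x in cube d, proj d h x * Real.log (proj d h x)

/-- The local average speed `U(x) = ∫ v h(x,v) ℳ(v) dv`. -/
def Uvec (d : ℕ) (h : (Fin d → ℝ) → (Fin d → ℝ) → ℝ) (x : Fin d → ℝ) : Fin d → ℝ :=
  fun i => ∫ v, v i * h x v * gauss d v

/-- The divergence `∇_x · U`. -/
def divU (d : ℕ) (h : (Fin d → ℝ) → (Fin d → ℝ) → ℝ) (x : Fin d → ℝ) : ℝ :=
  ∑ i, fderiv ℝ (fun y => Uvec d h y i) x (Pi.single i 1)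

/-- The `p`-entropy `H^{(p)}(h) = ∫ (h^p - h)/(p(p-1)) dμ`. -/
def Hp (d : ℕ) (p : ℝ) (h : (Fin d → ℝ) → (Fin d → ℝ) → ℝ) : ℝ :=
  intMu d fun x v => (h x v ^ p - h x v) / (p * (p - 1))

/-- The projected `p`-entropy `H_Π^{(p)}(h) = ∫_{𝕋^d} ((Πh)^p - Πh)/(p(p-1)) dx`. -/
def HpPi (d : ℕ) (p : ℝ) (h : (Fin d → ℝ) → (Fin d → ℝ) → ℝ) : ℝ :=
  ∫ x in cube d, ((proj d h x) ^ p - proj d h x) / (p * (p - 1))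

/-- The `p`-Fisher information `I^{(p)}(h) = ∫ h^{p-2} |∇_{x,v} h|² dμ`. -/
def Ipfull (d : ℕ) (p : ℝ) (h : (Fin d → ℝ) → (Fin d → ℝ) → ℝ) : ℝ :=
  intMu d fun x v => h x v ^ (p - 2) * (nsq d (gradx d h x v) + nsq d (gradv d h x v))

/-- The spatial `p`-Fisher information `∫ h^{p-2} |∇_x h|² dμ`. -/
def IpX (d : ℕ) (p : ℝ) (h : (Fin d → ℝ) → (Fin d → ℝ) → ℝ) : ℝ :=
  intMu d fun x v => h x v ^ (p - 2) * nsq d (gradx d h x v)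

/-- Regularity of a time-dependent `h`: smooth, periodic in `x`, bounded above and below by
positive constants, with all partial derivatives bounded. -/
def Regular (d : ℕ) (h : ℝ → (Fin d → ℝ) → (Fin d → ℝ) → ℝ) : Prop :=
  ContDiff ℝ (⊤ : ℕ∞) (fun q : ℝ × (Fin d → ℝ) × (Fin d → ℝ) => h q.1 q.2.1 q.2.2) ∧
  (∀ t, IsPeriodic d (h t)) ∧
  (∃ c C : ℝ, 0 < c ∧ ∀ t x v, c ≤ h t x v ∧ h t x v ≤ C) ∧
  (∀ n : ℕ, ∃ C : ℝ, ∀ q : ℝ × (Fin d → ℝ) × (Fin d → ℝ),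
    ‖iteratedFDeriv ℝ n (fun r : ℝ × (Fin d → ℝ) × (Fin d → ℝ) => h r.1 r.2.1 r.2.2) q‖ ≤ C)

/-- Regularity of a time-independent `h`: smooth, periodic in `x`, bounded above and below by
positive constants, with bounded gradient. -/
def RegularStatic (d : ℕ) (h : (Fin d → ℝ) → (Fin d → ℝ) → ℝ) : Prop :=
  ContDiff ℝ (⊤ : ℕ∞) (fun q : (Fin d → ℝ) × (Fin d → ℝ) => h q.1 q.2) ∧
  IsPeriodic d h ∧
  (∃ c C : ℝ, 0 < c ∧ ∀ x v, c ≤ h x v ∧ h x v ≤ C) ∧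
  (∃ C : ℝ, ∀ q : (Fin d → ℝ) × (Fin d → ℝ),
    ‖fderiv ℝ (fun r : (Fin d → ℝ) × (Fin d → ℝ) => h r.1 r.2) q‖ ≤ C)

/-- `h` solves the linear relaxation Boltzmann equation `∂_t h + v·∇_x h = λ(Πh - h)` for `t ≥ 0`. -/
def SolvesLRB (d : ℕ) (lam : ℝ) (h : ℝ → (Fin d → ℝ) → (Fin d → ℝ) → ℝ) : Prop :=
  ∀ t x v, 0 ≤ t →
    deriv (fun s => h s x v) t + dotp d v (gradx d (h t) x v)
      = lam * (proj d (h t) x - h t x v)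

/-- `h` solves the free transport equation `∂_t h + v·∇_x h = 0` for `t ≥ 0`. -/
def SolvesTransport (d : ℕ) (h : ℝ → (Fin d → ℝ) → (Fin d → ℝ) → ℝ) : Prop :=
  ∀ t x v, 0 ≤ t →
    deriv (fun s => h s x v) t + dotp d v (gradx d (h t) x v) = 0

/-- `h` solves the pure relaxation equation `∂_t h = λ(Πh - h)` for `t ≥ 0`. -/
def SolvesCollision (d : ℕ) (lam : ℝ) (h : ℝ → (Fin d → ℝ) → (Fin d → ℝ) → ℝ) : Prop :=
  ∀ t x v, 0 ≤ t →
    deriv (fun s => h s x v) t = lam * (proj d (h t) x - h t x v)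

/-- `h` solves the kinetic Fokker–Planck equation `∂_t h + v·∇_x h = Δ_v h - v·∇_v h` for `t ≥ 0`. -/
def SolvesKFP (d : ℕ) (h : ℝ → (Fin d → ℝ) → (Fin d → ℝ) → ℝ) : Prop :=
  ∀ t x v, 0 ≤ t →
    deriv (fun s => h s x v) t + dotp d v (gradx d (h t) x v)
      = lapv d (h t) x v - dotp d v (gradv d (h t) x v)

/-! ### Entropy of a positive function -/

/-- The entropy `∫ f log f dμ - (∫ f dμ) log (∫ f dμ)` of a positive function `f` with respect to
a probability measure `μ`. The second term makes it `1`-homogeneous in `f`. -/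
def ent {α : Type*} [MeasurableSpace α] (μ : Measure α) (f : α → ℝ) : ℝ :=
  (∫ x, f x * log (f x) ∂μ) - (∫ x, f x ∂μ) * log (∫ x, f x ∂μ)

lemma sub_le_mul_log_sub_mul_log {a b : ℝ} (ha : 0 < a) (hb : 0 < b) :
    a - b ≤ a * log a - a * log b := by
  have h : a * (log b - log a) ≤ a * (b / a - 1) := by
    rw [← log_div hb.ne' ha.ne']
    exact mul_le_mul_of_nonneg_left (log_le_sub_one_of_pos (div_pos hb ha)) ha.le
  have hba : a * (b / a - 1) = b - a := by field_simp
  linarith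

lemma integral_pos_of_ae_pos {α : Type*} [MeasurableSpace α] {μ : Measure α} [NeZero μ]
    {f : α → ℝ} (hf_pos : ∀ᵐ x ∂μ, 0 < f x) (hf : Integrable f μ) : 0 < ∫ x, f x ∂μ := by
  rw [integral_pos_iff_support_of_nonneg_ae (hf_pos.mono fun x hx => hx.le) hf, pos_iff_ne_zero]
  intro h_null
  obtain ⟨x, hx, hx_support⟩ := (hf_pos.and (measure_eq_zero_iff_ae_notMem.1 h_null)).exists
  exact hx_support hx.ne'

section SingleMeasure

variable {α : Type*} [MeasurableSpace α] {μ : Measure α} {f g : α → ℝ}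

/-- Gibbs' variational principle: equality holds when `g` is proportional to `f`. -/
lemma integral_mul_log_sub_le_ent [NeZero μ] (hf_pos : ∀ x, 0 < f x) (hg_pos : ∀ᵐ x ∂μ, 0 < g x)
    (hf : Integrable f μ) (hg : Integrable g μ) (hff : Integrable (fun x => f x * log (f x)) μ)
    (hfg : Integrable (fun x => f x * log (g x)) μ) :
    (∫ x, f x * log (g x) ∂μ) - (∫ x, f x ∂μ) * log (∫ x, g x ∂μ) ≤ ent μ f := by
  set m := ∫ x, f x ∂μ with hm_def
  set M := ∫ x, g x ∂μ
  have hm : 0 < m := integral_pos_of_ae_pos (ae_of_all _ hf_pos) hf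
  have hM : 0 < M := integral_pos_of_ae_pos hg_pos hg
  have h_pointwise : ∀ᵐ x ∂μ, f x - g x * (m / M) ≤
      f x * log (f x) - f x * log (g x) - f x * (log m - log M) := by
    filter_upwards [hg_pos] with x hx
    have h := sub_le_mul_log_sub_mul_log (hf_pos x) (mul_pos hx (div_pos hm hM))
    rw [log_mul hx.ne' (div_pos hm hM).ne', log_div hm.ne' hM.ne'] at h
    linarith
  have hffg : Integrable (fun x => f x * log (f x) - f x * log (g x)) μ := hff.sub hfg
  have h_integrated := integral_mono_ae (hf.sub (hg.mul_const _))
    (hffg.sub (hf.mul_const _)) h_pointwise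
  have h_left : ∫ x, (f x - g x * (m / M)) ∂μ = 0 := by
    rw [integral_sub hf (hg.mul_const _), integral_mul_const, mul_div_cancel₀ _ hM.ne', sub_self]
  have h_right : ∫ x, (f x * log (f x) - f x * log (g x) - f x * (log m - log M)) ∂μ =
      (∫ x, f x * log (f x) ∂μ) - (∫ x, f x * log (g x) ∂μ) - m * (log m - log M) := by
    rw [integral_sub hffg (hf.mul_const _), integral_sub hff hfg, integral_mul_const]
  have h := h_left.symm.trans_le (h_integrated.trans_eq h_right)
  rw [ent, ← hm_def]
  linarith

lemma ent_nonneg [IsProbabilityMeasure μ] (hf_pos : ∀ x, 0 < f x) (hf : Integrable f μ)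
    (hff : Integrable (fun x => f x * log (f x)) μ) : 0 ≤ ent μ f := by
  simpa using integral_mul_log_sub_le_ent (g := fun _ => 1) hf_pos (by simp) hf
    (integrable_const 1) hff (by simp)

lemma integrable_mul_log_of_memLp_two [IsFiniteMeasure μ] (hf_pos : ∀ x, 0 < f x)
    (hf : MemLp f 2 μ) : Integrable (fun x => f x * log (f x)) μ := by
  have hf_meas := hf.aestronglyMeasurable.aemeasurable
  refine integrable_of_le_of_le (hf_meas.mul hf_meas.log).aestronglyMeasurable
    (ae_of_all _ fun x => ?_) (ae_of_all _ fun x => ?_)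
    ((hf.integrable one_le_two).sub (integrable_const 1)) hf.integrable_sq
  · simpa using sub_le_mul_log_sub_mul_log (hf_pos x) one_pos
  · rw [sq]
    exact mul_le_mul_of_nonneg_left (log_le_self (hf_pos x).le) (hf_pos x).le

end SingleMeasure

section Product

variable {α β : Type*} [MeasurableSpace α] [MeasurableSpace β]
  {μ : Measure α} {ν : Measure β} {f : α × β → ℝ}

lemma integrable_integral_mul_log [IsFiniteMeasure μ] [IsProbabilityMeasure ν]
    (hf_pos : ∀ p, 0 < f p) (hf : Integrable f (μ.prod ν))
    (hff : Integrable (fun p => f p * log (f p)) (μ.prod ν)) :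
    Integrable (fun x => (∫ y, f (x, y) ∂ν) * log (∫ y, f (x, y) ∂ν)) μ := by
  have hF_meas := hf.integral_prod_left.aestronglyMeasurable.aemeasurable
  refine integrable_of_le_of_le (hF_meas.mul hF_meas.log).aestronglyMeasurable ?_ ?_
    (hf.integral_prod_left.sub (integrable_const 1)) hff.integral_prod_left
  · filter_upwards [hf.prod_right_ae] with x hx
    simpa using sub_le_mul_log_sub_mul_log
      (integral_pos_of_ae_pos (ae_of_all _ fun y => hf_pos (x, y)) hx) one_pos
  · filter_upwards [hf.prod_right_ae, hff.prod_right_ae] with x hx hxx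
    exact sub_nonneg.1 (ent_nonneg (fun y => hf_pos (x, y)) hx hxx)

lemma integrable_ent_prod_right [IsFiniteMeasure μ] [IsProbabilityMeasure ν]
    (hf_pos : ∀ p, 0 < f p) (hf : Integrable f (μ.prod ν))
    (hff : Integrable (fun p => f p * log (f p)) (μ.prod ν)) :
    Integrable (fun x => ent ν fun y => f (x, y)) μ :=
  hff.integral_prod_left.sub (integrable_integral_mul_log hf_pos hf hff)

lemma ent_prod_eq [IsFiniteMeasure μ] [IsProbabilityMeasure ν]
    (hf_pos : ∀ p, 0 < f p) (hf : Integrable f (μ.prod ν))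
    (hff : Integrable (fun p => f p * log (f p)) (μ.prod ν)) :
    ent (μ.prod ν) f =
      (∫ x, ent ν fun y => f (x, y) ∂μ) + ent μ fun x => ∫ y, f (x, y) ∂ν := by
  have h_slices : ∫ x, ent ν (fun y => f (x, y)) ∂μ = (∫ p, f p * log (f p) ∂μ.prod ν) -
      ∫ x, (∫ y, f (x, y) ∂ν) * log (∫ y, f (x, y) ∂ν) ∂μ := by
    rw [integral_prod _ hff]
    exact integral_sub hff.integral_prod_left (integrable_integral_mul_log hf_pos hf hff)
  rw [h_slices, ent, ent, integral_prod _ hf]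
  ring

/-- Apply Gibbs' variational principle to each slice `f (·, y)`, with the average of the slices as
test function. -/
lemma ent_integral_le [IsProbabilityMeasure μ] [IsProbabilityMeasure ν]
    (hf_pos : ∀ p, 0 < f p) (hf : Integrable f (μ.prod ν))
    (hff : Integrable (fun p => f p * log (f p)) (μ.prod ν)) :
    ent μ (fun x => ∫ y, f (x, y) ∂ν) ≤ ∫ y, ent μ (fun x => f (x, y)) ∂ν := by
  set F : α → ℝ := fun x => ∫ y, f (x, y) ∂ν with hF_def
  have hF : Integrable F μ := hf.integral_prod_left
  have hF_pos : ∀ᵐ x ∂μ, 0 < F x := hf.prod_right_ae.mono fun x hx =>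
    integral_pos_of_ae_pos (ae_of_all _ fun y => hf_pos (x, y)) hx
  have hfF : Integrable (fun p : α × β => f p * log (F p.1)) (μ.prod ν) := by
    refine (integrable_prod_iff ?_).2 ⟨?_, ?_⟩
    · exact hf.aestronglyMeasurable.mul
        (hF.aestronglyMeasurable.aemeasurable.log.aestronglyMeasurable.comp_fst)
    · exact hf.prod_right_ae.mono fun x hx => hx.mul_const (log (F x))
    · refine (integrable_integral_mul_log hf_pos hf hff).norm.congr (hF_pos.mono fun x hx => ?_)
      simp only [norm_mul, norm_of_nonneg (hf_pos _).le, integral_mul_const]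
      rw [norm_of_nonneg hx.le]
  have h_gibbs : ∀ᵐ y ∂ν, (∫ x, f (x, y) * log (F x) ∂μ) -
      (∫ x, f (x, y) ∂μ) * log (∫ x, F x ∂μ) ≤ ent μ fun x => f (x, y) := by
    filter_upwards [hf.prod_left_ae, hff.prod_left_ae, hfF.prod_left_ae] with y hy hyy hyF
    exact integral_mul_log_sub_le_ent (fun x => hf_pos (x, y)) hF_pos hy hF hyy hyF
  calc ent μ F
      = ∫ y, ((∫ x, f (x, y) * log (F x) ∂μ) - (∫ x, f (x, y) ∂μ) * log (∫ x, F x ∂μ)) ∂ν := by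
        rw [integral_sub hfF.integral_prod_right (hf.integral_prod_right.mul_const _),
          integral_mul_const, ← integral_prod_symm _ hfF, integral_prod _ hfF,
          ← integral_prod_symm _ hf, integral_prod _ hf]
        simp only [integral_mul_const, ent, hF_def]
    _ ≤ ∫ y, ent μ (fun x => f (x, y)) ∂ν :=
        integral_mono_ae (hfF.integral_prod_right.sub (hf.integral_prod_right.mul_const _))
          (integrable_ent_prod_right (fun p => hf_pos p.swap) hf.swap hff.swap) h_gibbs

lemma ent_prod_le [IsProbabilityMeasure μ] [IsProbabilityMeasure ν]
    (hf_pos : ∀ p, 0 < f p) (hf : Integrable f (μ.prod ν))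
    (hff : Integrable (fun p => f p * log (f p)) (μ.prod ν)) :
    ent (μ.prod ν) f ≤
      (∫ x, ent ν fun y => f (x, y) ∂μ) + ∫ y, ent μ (fun x => f (x, y)) ∂ν := by
  rw [ent_prod_eq hf_pos hf hff]
  gcongr
  exact ent_integral_le hf_pos hf hff

end Product

/-! ### Tensorization of the entropy -/

lemma ent_comp {α β : Type*} [MeasurableSpace α] [MeasurableSpace β] {μ : Measure α}
    {ν : Measure β} {φ : α → β} (hφ : MeasurePreserving φ μ ν) {f : β → ℝ}
    (hf : AEStronglyMeasurable f ν) : ent μ (fun x => f (φ x)) = ent ν f := by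
  rw [← hφ.map_eq] at hf
  have hff : AEStronglyMeasurable (fun y => f y * log (f y)) (μ.map φ) :=
    (hf.aemeasurable.mul hf.aemeasurable.log).aestronglyMeasurable
  rw [ent, ent, ← hφ.map_eq, integral_map hφ.aemeasurable hf, integral_map hφ.aemeasurable hff]

section Update

variable {ι : Type*} [Fintype ι] [DecidableEq ι] {α : ι → Type*} [∀ i, MeasurableSpace (α i)]
  {μ : ∀ i, Measure (α i)} [∀ i, IsProbabilityMeasure (μ i)] {f : (∀ i, α i) → ℝ}

lemma measurePreserving_update (μ : ∀ i, Measure (α i)) [∀ i, IsProbabilityMeasure (μ i)]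
    (i : ι) :
    MeasurePreserving (fun p : (∀ j, α j) × α i => Function.update p.1 i p.2)
      ((Measure.pi μ).prod (μ i)) (Measure.pi μ) := by
  refine ⟨measurable_update', (Measure.pi_eq fun s hs => ?_).symm⟩
  have h_preimage : (fun p : (∀ j, α j) × α i => Function.update p.1 i p.2) ⁻¹' Set.univ.pi s =
      (Set.univ.pi (Function.update s i Set.univ)) ×ˢ s i := by
    ext ⟨x, t⟩
    simp only [Set.mem_preimage, Set.mem_prod, Set.mem_univ_pi]
    rw [Function.forall_update_iff x fun j y => y ∈ s j,
      Function.forall_update_iff s fun j t => x j ∈ t]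
    simp [and_comm]
  rw [Measure.map_apply measurable_update' (.univ_pi hs), h_preimage, Measure.prod_prod,
    Measure.pi_pi, ← Finset.prod_erase_mul _ _ (Finset.mem_univ i), Function.update_self,
    measure_univ, mul_one, ← Finset.prod_erase_mul _ _ (Finset.mem_univ i)]
  congr 1
  refine Finset.prod_congr rfl fun j hj => ?_
  rw [Function.update_of_ne (Finset.ne_of_mem_erase hj)]

lemma integrable_integral_update (hf : Integrable f (Measure.pi μ)) (i : ι) :
    Integrable (fun x => ∫ t, f (Function.update x i t) ∂μ i) (Measure.pi μ) :=
  ((measurePreserving_update μ i).integrable_comp_of_integrable hf).integral_prod_left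

lemma integral_integral_update (hf : Integrable f (Measure.pi μ)) (i : ι) :
    ∫ x, ∫ t, f (Function.update x i t) ∂μ i ∂Measure.pi μ = ∫ x, f x ∂Measure.pi μ := by
  have h := measurePreserving_update μ i
  have hf_meas := hf.aestronglyMeasurable
  rw [← h.map_eq] at hf_meas
  calc ∫ x, ∫ t, f (Function.update x i t) ∂μ i ∂Measure.pi μ
      = ∫ p, f (Function.update p.1 i p.2) ∂(Measure.pi μ).prod (μ i) :=
        (integral_prod _ (h.integrable_comp_of_integrable hf)).symm
    _ = ∫ x, f x ∂Measure.pi μ := by rw [← integral_map h.aemeasurable hf_meas, h.map_eq]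

lemma integrable_ent_update (hf_pos : ∀ x, 0 < f x) (hf : Integrable f (Measure.pi μ))
    (hff : Integrable (fun x => f x * log (f x)) (Measure.pi μ)) (i : ι) :
    Integrable (fun x => ent (μ i) fun t => f (Function.update x i t)) (Measure.pi μ) :=
  integrable_ent_prod_right (fun _ => hf_pos _)
    ((measurePreserving_update μ i).integrable_comp_of_integrable hf)
    ((measurePreserving_update μ i).integrable_comp_of_integrable hff)

end Update

section Fin

variable {n : ℕ} {α : Fin (n + 1) → Type*} [∀ i, MeasurableSpace (α i)]
  {μ : ∀ i, Measure (α i)} {f : (∀ i, α i) → ℝ}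

lemma measurePreserving_insertNth (μ : ∀ i, Measure (α i)) [∀ i, SigmaFinite (μ i)]
    (i : Fin (n + 1)) :
    MeasurePreserving (fun p : α i × ∀ j, α (i.succAbove j) => i.insertNth p.1 p.2)
      ((μ i).prod (Measure.pi fun j => μ (i.succAbove j))) (Measure.pi μ) :=
  (measurePreserving_piFinSuccAbove μ i).symm

lemma integral_pi_insertNth [∀ i, SigmaFinite (μ i)] (hf : Integrable f (Measure.pi μ))
    (i : Fin (n + 1)) :
    ∫ x, f x ∂Measure.pi μ =
      ∫ t, ∫ y, f (i.insertNth t y) ∂(Measure.pi fun j => μ (i.succAbove j)) ∂μ i := by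
  have hf_ins := (measurePreserving_insertNth μ i).integrable_comp_of_integrable hf
  exact ((measurePreserving_piFinSuccAbove μ i).symm.integral_comp' f).symm.trans
    (integral_prod _ hf_ins)

lemma ent_pi_le_insertNth [∀ i, IsProbabilityMeasure (μ i)] (hf_pos : ∀ x, 0 < f x)
    (hf : Integrable f (Measure.pi μ)) (hff : Integrable (fun x => f x * log (f x)) (Measure.pi μ))
    (i : Fin (n + 1)) :
    ent (Measure.pi μ) f ≤ (∫ x, ent (μ i) (fun t => f (Function.update x i t)) ∂Measure.pi μ) +
      ∫ t, ent (Measure.pi fun j => μ (i.succAbove j)) (fun y => f (i.insertNth t y)) ∂μ i := by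
  have h := measurePreserving_insertNth μ i
  have h_along : ∫ x, ent (μ i) (fun t => f (Function.update x i t)) ∂Measure.pi μ =
      ∫ y, ent (μ i) (fun t => f (i.insertNth t y)) ∂Measure.pi fun j => μ (i.succAbove j) := by
    rw [integral_pi_insertNth (integrable_ent_update hf_pos hf hff i) i]
    simp only [Fin.update_insertNth, integral_const, probReal_univ, one_smul]
  rw [h_along, ← ent_comp h hf.aestronglyMeasurable]
  exact (ent_prod_le (fun _ => hf_pos _) (h.integrable_comp_of_integrable hf)
    (h.integrable_comp_of_integrable hff)).trans_eq (add_comm _ _)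

end Fin

lemma ent_pi_le {n : ℕ} {α : Fin n → Type*} [∀ i, MeasurableSpace (α i)]
    {μ : ∀ i, Measure (α i)} [∀ i, IsProbabilityMeasure (μ i)] {f : (∀ i, α i) → ℝ}
    (hf_pos : ∀ x, 0 < f x) (hf : Integrable f (Measure.pi μ))
    (hff : Integrable (fun x => f x * log (f x)) (Measure.pi μ)) :
    ent (Measure.pi μ) f ≤
      ∑ i, ∫ x, ent (μ i) (fun t => f (Function.update x i t)) ∂Measure.pi μ := by
  induction n with
  | zero =>
    have hf_const : ∀ x, f x = f default := fun x => congrArg f (Subsingleton.elim x default)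
    simp [ent, hf_const]
  | succ n ih =>
    have h := measurePreserving_insertNth μ 0
    have hf_ins := h.integrable_comp_of_integrable hf
    have hff_ins := h.integrable_comp_of_integrable hff
    have h_along : ∀ i, Integrable (fun x => ent (μ i) fun t => f (Function.update x i t))
        (Measure.pi μ) := integrable_ent_update hf_pos hf hff
    have h_along_ins : ∀ i : Fin n, Integrable (fun t => ∫ y, ent (μ (Fin.succAbove 0 i))
        (fun s => f (Function.update (Fin.insertNth 0 t y) (Fin.succAbove 0 i) s))
        ∂Measure.pi fun j => μ (Fin.succAbove 0 j)) (μ 0) := fun i =>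
      (h.integrable_comp_of_integrable (h_along (Fin.succAbove 0 i))).integral_prod_left
    rw [Fin.sum_univ_succAbove _ 0]
    refine (ent_pi_le_insertNth hf_pos hf hff 0).trans (add_le_add_right ?_ _)
    simp only [fun i => integral_pi_insertNth (h_along (Fin.succAbove 0 i)) 0]
    rw [← integral_finsetSum _ fun i _ => h_along_ins i]
    refine integral_mono_ae (integrable_ent_prod_right (fun _ => hf_pos _) hf_ins hff_ins)
      (integrable_finsetSum _ fun i _ => h_along_ins i) ?_
    filter_upwards [hf_ins.prod_right_ae, hff_ins.prod_right_ae] with t ht htt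
    simpa only [← Fin.insertNth_update] using ih (fun _ => hf_pos _) ht htt

/-! ### Logarithmic Sobolev inequality on the unit interval -/

section Variance

variable {α : Type*} [MeasurableSpace α] {μ : Measure α} {f g : α → ℝ}

lemma ent_le_variance_div_integral [IsProbabilityMeasure μ] (hf_pos : ∀ x, 0 < f x)
    (hf : MemLp f 2 μ) : ent μ f ≤ ProbabilityTheory.variance f μ / ∫ x, f x ∂μ := by
  have hf_int : Integrable f μ := hf.integrable one_le_two
  rw [ProbabilityTheory.variance_eq_sub hf, ent]
  set m := ∫ x, f x ∂μ
  have hm : 0 < m := integral_pos_of_ae_pos (ae_of_all _ hf_pos) hf_int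
  have h_pointwise : ∀ x, f x * log (f x) ≤ f x * (log m - 1) + (f ^ 2) x / m := fun x => by
    have h := log_le_sub_one_of_pos (div_pos (hf_pos x) hm)
    rw [log_div (hf_pos x).ne' hm.ne'] at h
    calc f x * log (f x) ≤ f x * (log m - 1 + f x / m) :=
          mul_le_mul_of_nonneg_left (by linarith) (hf_pos x).le
      _ = f x * (log m - 1) + (f ^ 2) x / m := by rw [Pi.pow_apply]; ring
  have hf_sq : Integrable (fun x => (f ^ 2) x / m) μ := hf.integrable_sq.div_const m
  have h_integrated : ∫ x, f x * log (f x) ∂μ ≤ m * (log m - 1) + (∫ x, (f ^ 2) x ∂μ) / m := by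
    rw [← integral_mul_const, ← integral_div, ← integral_add (hf_int.mul_const _) hf_sq]
    exact integral_mono (integrable_mul_log_of_memLp_two hf_pos hf)
      ((hf_int.mul_const _).add hf_sq) h_pointwise
  calc (∫ x, f x * log (f x) ∂μ) - m * log m
      ≤ m * (log m - 1) + (∫ x, (f ^ 2) x ∂μ) / m - m * log m := by gcongr
    _ = ((∫ x, (f ^ 2) x ∂μ) - m ^ 2) / m := by field_simp; ring

lemma sq_integral_div_integral_le [NeZero μ] (hf_pos : ∀ x, 0 < f x) (hf : Integrable f μ)
    (hg : Integrable g μ) (hgf : Integrable (fun x => g x ^ 2 / f x) μ) :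
    (∫ x, g x ∂μ) ^ 2 / ∫ x, f x ∂μ ≤ ∫ x, g x ^ 2 / f x ∂μ := by
  set m := ∫ x, f x ∂μ
  set s := (∫ x, g x ∂μ) / m with hs
  have hm : 0 < m := integral_pos_of_ae_pos (ae_of_all _ hf_pos) hf
  have h_pointwise : ∀ x, g x * (2 * s) - f x * s ^ 2 ≤ g x ^ 2 / f x := fun x => by
    rw [le_div_iff₀ (hf_pos x)]
    linarith [sq_nonneg (g x - f x * s)]
  calc (∫ x, g x ∂μ) ^ 2 / m = (∫ x, g x ∂μ) * (2 * s) - m * s ^ 2 := by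
        rw [hs]; field_simp; ring
    _ = ∫ x, (g x * (2 * s) - f x * s ^ 2) ∂μ := by
        rw [integral_sub (hg.mul_const _) (hf.mul_const _), integral_mul_const, integral_mul_const]
    _ ≤ ∫ x, g x ^ 2 / f x ∂μ :=
        integral_mono ((hg.mul_const _).sub (hf.mul_const _)) hgf h_pointwise

end Variance

instance isProbabilityMeasure_restrict_unitInterval :
    IsProbabilityMeasure (volume.restrict (Set.Icc (0 : ℝ) 1)) := ⟨by simp⟩

section Interval

variable {f : ℝ → ℝ} {a b : ℝ}

lemma sub_le_integral_abs_deriv (hf : ContDiff ℝ 1 f) {x y : ℝ} (hx : x ∈ Set.Icc a b)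
    (hy : y ∈ Set.Icc a b) : f y - f x ≤ ∫ t in Set.Icc a b, |deriv f t| := by
  have hf' : Continuous (deriv f) := hf.continuous_deriv_one
  rw [← intervalIntegral.integral_deriv_eq_sub
    (fun t _ => hf.differentiable_one.differentiableAt) (hf'.intervalIntegrable x y)]
  calc ∫ t in x..y, deriv f t ≤ ∫ t in Set.uIoc x y, |deriv f t| :=
        (le_norm_self _).trans intervalIntegral.norm_integral_le_integral_norm_uIoc
    _ ≤ ∫ t in Set.Icc a b, |deriv f t| :=
        setIntegral_mono_set (hf'.abs.continuousOn.integrableOn_compact isCompact_Icc)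
          (ae_of_all _ fun t => abs_nonneg _)
          (Set.uIoc_subset_uIcc.trans (Set.uIcc_subset_Icc hx hy)).eventuallyLE

lemma variance_le_sq_integral_abs_deriv {μ : Measure ℝ} [IsProbabilityMeasure μ]
    (hf : ContDiff ℝ 1 f) (hμ : ∀ᵐ t ∂μ, t ∈ Set.Icc a b) :
    ProbabilityTheory.variance f μ ≤ ((∫ t in Set.Icc a b, |deriv f t|) / 2) ^ 2 := by
  have h_nonempty : (Set.Icc a b).Nonempty := hμ.exists
  obtain ⟨x, hx, hx_min⟩ := isCompact_Icc.exists_isMinOn h_nonempty hf.continuous.continuousOn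
  obtain ⟨y, hy, hy_max⟩ := isCompact_Icc.exists_isMaxOn h_nonempty hf.continuous.continuousOn
  have h_range : ∀ᵐ t ∂μ, f t ∈ Set.Icc (f x) (f y) := hμ.mono fun t ht => ⟨hx_min ht, hy_max ht⟩
  refine (ProbabilityTheory.variance_le_sq_of_bounded h_range
    hf.continuous.aemeasurable).trans ?_
  have h_nonneg : 0 ≤ f y - f x := sub_nonneg.2 (hx_min hy)
  gcongr
  exact sub_le_integral_abs_deriv hf hx hy

lemma log_sobolev_unitInterval (hf_pos : ∀ t, 0 < f t) (hf : ContDiff ℝ 1 f) :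
    ent (volume.restrict (Set.Icc 0 1)) f ≤
      1 / 4 * ∫ t in Set.Icc (0 : ℝ) 1, deriv f t ^ 2 / f t := by
  have hf' : Continuous (deriv f) := hf.continuous_deriv_one
  have h_integrable : ∀ {g : ℝ → ℝ}, Continuous g → IntegrableOn g (Set.Icc 0 1) :=
    fun hg => hg.continuousOn.integrableOn_compact isCompact_Icc
  have hf_memLp : MemLp f 2 (volume.restrict (Set.Icc 0 1)) :=
    (memLp_two_iff_integrable_sq hf.continuous.aestronglyMeasurable).2
      (h_integrable (hf.continuous.pow 2))
  have h_cauchy_schwarz := sq_integral_div_integral_le hf_pos (h_integrable hf.continuous)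
    (h_integrable hf'.abs)
    (h_integrable ((hf'.abs.pow 2).div hf.continuous fun t => (hf_pos t).ne'))
  simp only [sq_abs] at h_cauchy_schwarz
  have h_mean : 0 ≤ ∫ t in Set.Icc 0 1, f t := integral_nonneg fun t => (hf_pos t).le
  calc ent (volume.restrict (Set.Icc 0 1)) f
      ≤ ProbabilityTheory.variance f (volume.restrict (Set.Icc 0 1)) /
          ∫ t in Set.Icc 0 1, f t := ent_le_variance_div_integral hf_pos hf_memLp
    _ ≤ ((∫ t in Set.Icc 0 1, |deriv f t|) / 2) ^ 2 / ∫ t in Set.Icc 0 1, f t := by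
        gcongr
        exact variance_le_sq_integral_abs_deriv hf (ae_restrict_mem measurableSet_Icc)
    _ = 1 / 4 * ((∫ t in Set.Icc 0 1, |deriv f t|) ^ 2 / ∫ t in Set.Icc 0 1, f t) := by ring
    _ ≤ 1 / 4 * ∫ t in Set.Icc 0 1, deriv f t ^ 2 / f t := by gcongr

end Interval

/-! ### Logarithmic Sobolev inequality on the unit cube -/

section Cube

variable {d : ℕ} {f : (Fin d → ℝ) → ℝ}

lemma restrict_cube (d : ℕ) :
    volume.restrict (cube d) = Measure.pi fun _ => volume.restrict (Set.Icc (0 : ℝ) 1) := by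
  rw [cube, ← Set.pi_univ_Icc, volume_pi, Measure.restrict_pi_pi]
  rfl

instance isProbabilityMeasure_restrict_cube (d : ℕ) :
    IsProbabilityMeasure (volume.restrict (cube d)) := by
  rw [restrict_cube]
  infer_instance

lemma integrableOn_cube (hf : Continuous f) : IntegrableOn f (cube d) :=
  hf.continuousOn.integrableOn_compact isCompact_Icc

lemma continuous_grad1 (hf : ContDiff ℝ 1 f) (i : Fin d) : Continuous fun x => grad1 d f x i :=
  (hf.continuous_fderiv one_ne_zero).clm_apply continuous_const

lemma deriv_comp_update (hf : Differentiable ℝ f) (x : Fin d → ℝ) (i : Fin d) (t : ℝ) :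
    deriv (fun s => f (Function.update x i s)) t = grad1 d f (Function.update x i t) i :=
  (hf.differentiableAt.hasFDerivAt.comp_hasDerivAt t (hasDerivAt_update x i t)).deriv

lemma log_sobolev_cube (hf_pos : ∀ x, 0 < f x) (hf : ContDiff ℝ 1 f) :
    ent (volume.restrict (cube d)) f ≤ 1 / 4 * ∫ x in cube d, nsq d (grad1 d f x) / f x := by
  set fisher : Fin d → (Fin d → ℝ) → ℝ := fun i x => grad1 d f x i ^ 2 / f x
  have h_fisher : ∀ i, IntegrableOn (fisher i) (cube d) := fun i => integrableOn_cube
    (((continuous_grad1 hf i).pow 2).div hf.continuous fun x => (hf_pos x).ne')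
  have hf_int := integrableOn_cube hf.continuous
  have hff_int := integrableOn_cube (hf.continuous.mul
    (hf.continuous.log fun x => (hf_pos x).ne'))
  have h_sum : ∫ x in cube d, nsq d (grad1 d f x) / f x = ∑ i, ∫ x in cube d, fisher i x := by
    rw [← integral_finsetSum _ fun i _ => h_fisher i]
    simp only [nsq, Finset.sum_div, fisher]
  rw [h_sum, Finset.mul_sum]
  simp only [IntegrableOn, restrict_cube] at hf_int hff_int h_fisher ⊢
  refine (ent_pi_le hf_pos hf_int hff_int).trans (Finset.sum_le_sum fun i _ => ?_)
  rw [← integral_integral_update (h_fisher i) i, ← integral_const_mul]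
  refine integral_mono (integrable_ent_update hf_pos hf_int hff_int i)
    ((integrable_integral_update (h_fisher i) i).const_mul _) fun x => ?_
  simpa only [deriv_comp_update (hf.differentiable one_ne_zero)] using
    log_sobolev_unitInterval (fun t => hf_pos (Function.update x i t))
      (hf.comp (contDiff_update 1 x i))

end Cube

/-! ### The Gaussian velocity distribution -/

lemma gauss_eq_prod (d : ℕ) (v : Fin d → ℝ) :
    gauss d v = ∏ i, ProbabilityTheory.gaussianPDFReal 0 1 (v i) := by
  have h_const : (2 * π) ^ (-(d : ℝ) / 2) = (√(2 * π))⁻¹ ^ d := by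
    rw [sqrt_eq_rpow, ← rpow_neg two_pi_pos.le, ← rpow_mul_natCast two_pi_pos.le]
    congr 1
    ring
  simp only [gauss, ProbabilityTheory.gaussianPDFReal, NNReal.coe_one, mul_one, sub_zero,
    Finset.prod_mul_distrib, Finset.prod_const, Finset.card_univ, Fintype.card_fin, h_const,
    ← exp_sum, ← Finset.sum_div, Finset.sum_neg_distrib]

lemma gauss_pos (d : ℕ) (v : Fin d → ℝ) : 0 < gauss d v := by
  rw [gauss]
  positivity

lemma integrable_gauss (d : ℕ) : Integrable (gauss d) := by
  rw [funext (gauss_eq_prod d)]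
  exact Integrable.fintype_prod fun _ => ProbabilityTheory.integrable_gaussianPDFReal 0 1

lemma integral_gauss (d : ℕ) : ∫ v, gauss d v = 1 := by
  simp only [gauss_eq_prod]
  rw [integral_fintype_prod_volume_eq_pow,
    ProbabilityTheory.integral_gaussianPDFReal_eq_one 0 one_ne_zero, one_pow]

/-- The Gaussian probability measure `ℳ(v) dv` on velocity space `ℝ^d`. -/
def gaussMeasure (d : ℕ) : Measure (Fin d → ℝ) :=
  volume.withDensity fun v => ENNReal.ofReal (gauss d v)

instance isProbabilityMeasure_gaussMeasure (d : ℕ) : IsProbabilityMeasure (gaussMeasure d) := by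
  constructor
  rw [gaussMeasure, withDensity_apply _ .univ, Measure.restrict_univ,
    ← ofReal_integral_eq_lintegral_ofReal (integrable_gauss d)
      (ae_of_all _ fun v => (gauss_pos d v).le), integral_gauss, ENNReal.ofReal_one]

lemma integral_gaussMeasure (d : ℕ) (F : (Fin d → ℝ) → ℝ) :
    ∫ v, F v ∂gaussMeasure d = ∫ v, F v * gauss d v := by
  rw [gaussMeasure, integral_withDensity_eq_integral_toReal_smul₀
    (integrable_gauss d).aestronglyMeasurable.aemeasurable.ennreal_ofReal (by simp)]
  simp only [ENNReal.toReal_ofReal (gauss_pos d _).le, smul_eq_mul, mul_comm]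

lemma intMu_eq (d : ℕ) (F : (Fin d → ℝ) → (Fin d → ℝ) → ℝ) :
    intMu d F = ∫ x in cube d, ∫ v, F x v ∂gaussMeasure d := by
  simp only [intMu, integral_gaussMeasure]

lemma HPi_eq_ent {d : ℕ} {h : (Fin d → ℝ) → (Fin d → ℝ) → ℝ} (h_norm : intMu d h = 1) :
    HPi d h = ent (volume.restrict (cube d)) fun x => ∫ v, h x v ∂gaussMeasure d := by
  rw [ent, ← intMu_eq, h_norm, log_one, mul_zero, sub_zero, HPi]
  simp only [proj, integral_gaussMeasure]

/-! ### The spatial Fisher information -/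

section Gradient

variable {d : ℕ} {h : (Fin d → ℝ) → (Fin d → ℝ) → ℝ}

lemma gradx_eq_fderiv_uncurry {x v : Fin d → ℝ}
    (h_diff : DifferentiableAt ℝ (Function.uncurry h) (x, v)) (i : Fin d) :
    gradx d h x v i = fderiv ℝ (Function.uncurry h) (x, v) (Pi.single i 1, 0) := by
  have h_slice : HasFDerivAt (fun y => h y v) _ x :=
    h_diff.hasFDerivAt.comp (f := fun y => (y, v)) x (hasFDerivAt_prodMk_left x v)
  rw [gradx, h_slice.fderiv]
  rfl

lemma continuous_gradx (h_smooth : ContDiff ℝ 1 (Function.uncurry h)) (i : Fin d) :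
    Continuous fun p : (Fin d → ℝ) × (Fin d → ℝ) => gradx d h p.1 p.2 i := by
  simp only [gradx_eq_fderiv_uncurry (h_smooth.differentiable one_ne_zero _)]
  exact (h_smooth.continuous_fderiv one_ne_zero).clm_apply continuous_const

lemma abs_gradx_le {x v : Fin d → ℝ} (h_diff : DifferentiableAt ℝ (Function.uncurry h) (x, v))
    (i : Fin d) : |gradx d h x v i| ≤ ‖fderiv ℝ (Function.uncurry h) (x, v)‖ := by
  rw [gradx_eq_fderiv_uncurry h_diff]
  refine (fderiv ℝ (Function.uncurry h) (x, v)).unit_le_opNorm _ ?_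
  simp [Prod.norm_def, Pi.norm_single]

end Gradient

namespace RegularStatic

variable {d : ℕ} {h : (Fin d → ℝ) → (Fin d → ℝ) → ℝ}

lemma contDiff_one (h_reg : RegularStatic d h) : ContDiff ℝ 1 (Function.uncurry h) :=
  h_reg.1.of_le (by simp)

lemma memLp (h_reg : RegularStatic d h) (p : ENNReal)
    (μ : Measure ((Fin d → ℝ) × (Fin d → ℝ))) [IsFiniteMeasure μ] :
    MemLp (Function.uncurry h) p μ := by
  obtain ⟨-, -, ⟨c, C, hc, h_bound⟩, -⟩ := id h_reg
  exact .of_bound h_reg.contDiff_one.continuous.aestronglyMeasurable C (ae_of_all _ fun q =>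
    (norm_of_nonneg (hc.le.trans (h_bound q.1 q.2).1)).trans_le (h_bound q.1 q.2).2)

lemma integrable_fisher (h_reg : RegularStatic d h) (μ : Measure ((Fin d → ℝ) × (Fin d → ℝ)))
    [IsFiniteMeasure μ] :
    Integrable (fun p => nsq d (gradx d h p.1 p.2) / h p.1 p.2) μ := by
  obtain ⟨-, -, ⟨c, C, hc, h_bound⟩, ⟨K, hK⟩⟩ := id h_reg
  have h_smooth := h_reg.contDiff_one
  have h_pos : ∀ p : (Fin d → ℝ) × (Fin d → ℝ), 0 < h p.1 p.2 :=
    fun p => hc.trans_le (h_bound p.1 p.2).1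
  simp only [nsq, Finset.sum_div]
  refine integrable_finsetSum _ fun i _ => .of_bound
    (((continuous_gradx h_smooth i).pow 2).div h_smooth.continuous
      fun p => (h_pos p).ne').aestronglyMeasurable (K ^ 2 / c) (ae_of_all _ fun p => ?_)
  rw [norm_of_nonneg (div_nonneg (sq_nonneg _) (h_pos p).le), ← sq_abs]
  gcongr
  · exact (abs_gradx_le (h_smooth.differentiable one_ne_zero p) i).trans (hK p)
  · exact (h_bound p.1 p.2).1

end RegularStatic

theorem projected_entropy_le_spatial_fisher_general {d : ℕ} {α : Type*} [MeasurableSpace α]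
    {ν : Measure α} [IsProbabilityMeasure ν] {h : (Fin d → ℝ) → α → ℝ}
    (h_pos : ∀ x v, 0 < h x v) (h_smooth : ∀ v, ContDiff ℝ 1 fun x => h x v)
    (h_int : Integrable (Function.uncurry h) ((volume.restrict (cube d)).prod ν))
    (h_log_int : Integrable (fun p => h p.1 p.2 * log (h p.1 p.2))
      ((volume.restrict (cube d)).prod ν))
    (h_fisher_int : Integrable (fun p => nsq d (grad1 d (fun y => h y p.2) p.1) / h p.1 p.2)
      ((volume.restrict (cube d)).prod ν)) :
    ent (volume.restrict (cube d)) (fun x => ∫ v, h x v ∂ν) ≤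
      1 / 4 * ∫ x in cube d, ∫ v, nsq d (grad1 d (fun y => h y v) x) / h x v ∂ν := by
  have h_pos' : ∀ p, 0 < Function.uncurry h p := fun p => h_pos p.1 p.2
  calc ent (volume.restrict (cube d)) (fun x => ∫ v, h x v ∂ν)
      ≤ ∫ v, ent (volume.restrict (cube d)) (fun x => h x v) ∂ν :=
        ent_integral_le h_pos' h_int h_log_int
    _ ≤ ∫ v, (1 / 4 * ∫ x in cube d, nsq d (grad1 d (fun y => h y v) x) / h x v) ∂ν :=
        integral_mono (integrable_ent_prod_right (fun p => h_pos' p.swap) h_int.swap h_log_int.swap)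
          (h_fisher_int.integral_prod_right.const_mul _)
          fun v => log_sobolev_cube (fun x => h_pos x v) (h_smooth v)
    _ = 1 / 4 * ∫ x in cube d, ∫ v, nsq d (grad1 d (fun y => h y v) x) / h x v ∂ν := by
        rw [integral_const_mul, ← integral_integral_swap h_fisher_int]

/-- Projected entropy is controlled by the spatial Fisher information:
there is `C > 0` depending only on `d` with
`∫_{𝕋^d} Πh log Πh dx ≤ C ∫ |∇_x h|²/h dμ` for all regular normalized `h`. -/
theorem projected_entropy_le_spatial_fisher (d : ℕ) (hd : 1 ≤ d) :
    ∃ C : ℝ, 0 < C ∧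
      ∀ h : (Fin d → ℝ) → (Fin d → ℝ) → ℝ,
        (∀ x v, 0 < h x v) → RegularStatic d h → intMu d h = 1 →
        HPi d h ≤ C * intMu d fun x v => nsq d (gradx d h x v) / h x v := by
  refine ⟨1 / 4, by norm_num, fun h h_pos h_reg h_norm => ?_⟩
  rw [HPi_eq_ent h_norm, intMu_eq]
  exact projected_entropy_le_spatial_fisher_general h_pos
    (fun v => h_reg.contDiff_one.comp (contDiff_prodMk_left v))
    ((h_reg.memLp 1 _).integrable le_rfl)
    (integrable_mul_log_of_memLp_two (fun p => h_pos p.1 p.2) (h_reg.memLp 2 _))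
    (h_reg.integrable_fisher _)

end
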